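/- Let λ be a regular uncountable cardinal, (D, ≤) a preorder, G ⊆ D a nonempty downward-directed subset with |G| < λ, α an ordinal, and ⟨S_i : i ≤ α⟩ a sequence of functions from D into subsets of λ such that for all d, e ∈ D and all i: (a) each S_i(d) is a closed bounded subset of λ, S_0(d) = ∅, and S_i(d) ≠ ∅ for 1 ≤ i ≤ α; (b) if e ≤ d then S_i(d) ⊆ S_i(e); (c) S_i(d) ⊑ S_{i+1}(d) for i < α; (d) if e ≤ d and i < α then S_{i+1}(d) ∖ S_i(d) ⊑ S_{i+1}(e) ∖ S_i(e); (e) for limit i ≤ α, S_i(d) is the closure of ⋃_{j<i} S_j(d). Then for every ξ ≤ α, the closure C_ξ = cl(⋃_{d∈G} S_ξ(d)) in the order topology of λ equals ⋃_{d ∈ G} S_ξ(d) ∪ { sup_{d ∈ G} (max S_η(d)) : 1 ≤ η ≤ ξ }; that is, passing to the closure adds exactly the suprema over G of the maxima of the blocks at the levels η ≤ ξ. -/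

import Mathlib

/-- `t` end-extends `s` (`s ⊑ t`): `s ⊆ t` and every element of `t` not in `s` is
strictly above all elements of `s` (equivalently, for nonempty closed `s`,
`t ∩ (sup s + 1) = s`; in particular `∅ ⊑ t` always). -/
def SqSub (s t : Set Ordinal) : Prop :=
  s ⊆ t ∧ ∀ x ∈ t, x ∉ s → ∀ y ∈ s, y < x

/-- `s` is a closed bounded subset of the ordinal `lam`. -/
def ClosedBddIn (lam : Ordinal) (s : Set Ordinal) : Prop :=
  s ⊆ Set.Iio lam ∧ sSup s < lam ∧
    ∀ γ < lam, γ ≠ 0 → sSup (s ∩ Set.Iio γ) = γ → γ ∈ s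

/-- The closure of `A` in the order topology of the ordinal `lam`:
`A` together with all of its limit points below `lam`. -/
def clIn (lam : Ordinal) (A : Set Ordinal) : Set Ordinal :=
  A ∪ {γ | γ < lam ∧ γ ≠ 0 ∧ sSup (A ∩ Set.Iio γ) = γ}

universe u

/-!
Write `U η = ⋃ d ∈ G, S η d`. Directedness of `G` makes `U i ⊑ U j` for `i ≤ j`. Let `γ < lam` be an
accumulation point of `U ξ` outside `U ξ`, and let `η ≤ ξ` be the least level such that `γ` is an
accumulation point of `U η`. Then `U η` does not exceed `γ`, so `γ = sup (U η)`:

* below `η`, a point of `U i` above `γ` would, as `U i ⊑ U η`, make `γ` an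
  accumulation point of `U i`;
* if `η = i + 1`, then `γ` is an accumulation point of the union of the increments
  `S (i + 1) d \ S i d`, which are `⊑`-increasing along `G`, so a point of `S (i + 1) d` above `γ`
  would make `γ` an accumulation point of the closed set `S (i + 1) d`, hence an element of it;
* if `η` is a limit, `S η d` is the closure of sets that do not exceed `γ`.
-/

universe v w

open Set Filter Topology

theorem sSup_image_sSup_of_isLUB_biUnion {ι β : Type*} [ConditionallyCompleteLinearOrderBot β]
    {K : Set ι} {f : ι → Set β} {b : β} (h : IsLUB (⋃ k ∈ K, f k) b) :
    sSup ((fun k => sSup (f k)) '' K) = b := by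
  have hlub (k : K) : IsLUB (f k) (sSup (f k)) :=
    isLUB_csSup' ⟨b, fun _ hx => h.1 (mem_biUnion k.2 hx)⟩
  rw [biUnion_eq_iUnion, ← isLUB_iUnion_iff_of_isLUB hlub] at h
  rw [image_eq_range]
  exact (isLUB_csSup' h.bddAbove).unique h

section Closure

variable {lam γ : Ordinal.{u}} {A s : Set Ordinal.{u}}

theorem accPt_principal_iff_sSup_inter_Iio :
    AccPt γ (𝓟 A) ↔ γ ≠ 0 ∧ sSup (A ∩ Iio γ) = γ := by
  rw [SuccOrder.accPt_principal, isMin_iff_eq_bot, Ordinal.bot_eq_zero]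
  refine and_congr_right fun hγ => ⟨fun h => ?_, fun h β hβ => ?_⟩
  · refine csSup_eq_of_forall_le_of_forall_lt_exists_gt ?_ (fun x hx => hx.2.le) fun β hβ => ?_
    · obtain ⟨x, hxA, -, hxγ⟩ := h 0 (pos_iff_ne_zero.2 hγ)
      exact ⟨x, hxA, hxγ⟩
    · obtain ⟨x, hxA, hβx, hxγ⟩ := h β hβ
      exact ⟨x, ⟨hxA, hxγ⟩, hβx⟩
  · obtain ⟨x, ⟨hxA, hxγ⟩, hβx⟩ := exists_lt_of_lt_csSup' (h.symm ▸ hβ)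
    exact ⟨x, hxA, hβx, hxγ⟩

theorem mem_clIn_iff : γ ∈ clIn lam A ↔ γ ∈ A ∨ γ < lam ∧ AccPt γ (𝓟 A) := by
  rw [accPt_principal_iff_sSup_inter_Iio]
  rfl

theorem clIn_subset_closure : clIn lam A ⊆ closure A := by
  intro γ hγ
  rw [closure_eq_self_union_derivedSet]
  exact (mem_clIn_iff.1 hγ).imp_right And.right

theorem mem_clIn_of_mem_closure (hγ : γ < lam) (hA : γ ∈ closure A) : γ ∈ clIn lam A := by
  rw [closure_eq_self_union_derivedSet] at hA
  exact mem_clIn_iff.2 (hA.imp_right fun hacc => ⟨hγ, hacc⟩)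

namespace ClosedBddIn

theorem bddAbove (h : ClosedBddIn lam s) : BddAbove s :=
  bddAbove_Iio.mono h.1

theorem mem_of_accPt (h : ClosedBddIn lam s) (hγ : γ < lam) (hacc : AccPt γ (𝓟 s)) : γ ∈ s :=
  have ⟨hγ0, hsup⟩ := accPt_principal_iff_sSup_inter_Iio.1 hacc
  h.2.2 γ hγ hγ0 hsup

theorem sSup_mem (h : ClosedBddIn lam s) (hs : s.Nonempty) : sSup s ∈ s :=
  (mem_clIn_iff.1 (mem_clIn_of_mem_closure h.2.1 (csSup_mem_closure hs h.bddAbove))).elim id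
    fun hacc => h.mem_of_accPt hacc.1 hacc.2

end ClosedBddIn

end Closure

section EndExtension

variable {lam γ : Ordinal.{u}} {r s t : Set Ordinal.{u}}

namespace SqSub

theorem refl (s : Set Ordinal.{u}) : SqSub s s :=
  ⟨Subset.rfl, fun _ hx hxs => absurd hx hxs⟩

theorem mem_of_le (h : SqSub s t) {x y : Ordinal.{u}} (hx : x ∈ t) (hy : y ∈ s) (hxy : x ≤ y) :
    x ∈ s :=
  by_contra fun hxs => (h.2 x hx hxs y hy).not_ge hxy

theorem of_forall_mem_of_le (hst : s ⊆ t) (h : ∀ x ∈ t, ∀ y ∈ s, x ≤ y → x ∈ s) : SqSub s t :=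
  ⟨hst, fun x hx hxs y hy => not_le.1 fun hxy => hxs (h x hx y hy hxy)⟩

theorem trans (hrs : SqSub r s) (hst : SqSub s t) : SqSub r t :=
  of_forall_mem_of_le (hrs.1.trans hst.1) fun _ hx _ hy hxy =>
    hrs.mem_of_le (hst.mem_of_le hx (hrs.1 hy) hxy) hy hxy

theorem accPt_of_lt (h : SqSub s t) (hacc : AccPt γ (𝓟 t)) {y : Ordinal.{u}} (hy : y ∈ s)
    (hγy : γ < y) : AccPt γ (𝓟 s) :=
  (hacc.nhds_inter (Iio_mem_nhds hγy)).mono <| principal_mono.2 fun _ hx =>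
    h.mem_of_le hx.2 hy (le_of_lt hx.1)

theorem subset_Iic_of_not_accPt (h : SqSub s t) (ht : AccPt γ (𝓟 t)) (hs : ¬ AccPt γ (𝓟 s)) :
    s ⊆ Iic γ :=
  fun _ hy => not_lt.1 fun hγy => hs (h.accPt_of_lt ht hy hγy)

theorem clIn_right (h : SqSub s t) (hs : ClosedBddIn lam s) : SqSub s (clIn lam t) := by
  refine of_forall_mem_of_le (h.1.trans subset_union_left) fun x hx y hy hxy => ?_
  obtain hxt | ⟨hxlam, hacc⟩ := mem_clIn_iff.1 hx
  · exact h.mem_of_le hxt hy hxy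
  · obtain rfl | hxy := hxy.eq_or_lt
    · exact hy
    · exact hs.mem_of_accPt hxlam (h.accPt_of_lt hacc hy hxy)

theorem biUnion_right {ι : Type*} {rel : ι → ι → Prop} {K : Set ι} {B : ι → Set Ordinal.{u}}
    (hK : DirectedOn rel K) (hB : ∀ k ∈ K, ∀ l ∈ K, rel k l → SqSub (B k) (B l)) {k : ι}
    (hk : k ∈ K) : SqSub (B k) (⋃ l ∈ K, B l) := by
  refine of_forall_mem_of_le (subset_biUnion_of_mem hk) fun x hx y hy hxy => ?_
  obtain ⟨l, hl, hxl⟩ := mem_iUnion₂.1 hx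
  obtain ⟨m, hm, hkm, hlm⟩ := hK k hk l hl
  exact (hB k hk m hm hkm).mem_of_le ((hB l hl m hm hlm).1 hxl) hy hxy

theorem biUnion {ι : Type*} {rel : ι → ι → Prop} {K : Set ι} {A B : ι → Set Ordinal.{u}}
    (hK : DirectedOn rel K) (hA : ∀ k ∈ K, ∀ l ∈ K, rel k l → A k ⊆ A l)
    (hB : ∀ k ∈ K, ∀ l ∈ K, rel k l → B k ⊆ B l)
    (hAB : ∀ k ∈ K, SqSub (A k) (B k)) : SqSub (⋃ k ∈ K, A k) (⋃ k ∈ K, B k) := by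
  refine of_forall_mem_of_le (biUnion_mono Subset.rfl fun k hk => (hAB k hk).1)
    fun x hx y hy hxy => ?_
  obtain ⟨k, hk, hxk⟩ := mem_iUnion₂.1 hx
  obtain ⟨l, hl, hyl⟩ := mem_iUnion₂.1 hy
  obtain ⟨m, hm, hkm, hlm⟩ := hK k hk l hl
  exact mem_biUnion hm ((hAB m hm).mem_of_le (hB k hk m hm hkm hxk) (hA l hl m hm hlm hyl) hxy)

end SqSub

end EndExtension

/-- A continuous `⊑`-increasing sequence of closed bounded subsets of `lam`, indexed by the ordinals
`i ≤ α`: the properties of the sequence `⟨S_i(d) : i ≤ α⟩` of a single condition `d`. Values at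
indices above `α` are unconstrained. -/
structure IsBlockSeq (lam : Ordinal.{u}) (α : Ordinal.{v}) (s : Ordinal.{v} → Set Ordinal.{u}) :
    Prop where
  closedBddIn : ∀ i ≤ α, ClosedBddIn lam (s i)
  sqSub_add_one : ∀ i < α, SqSub (s i) (s (i + 1))
  eq_clIn : ∀ i ≤ α, Order.IsSuccLimit i → s i = clIn lam (⋃ j ∈ Iio i, s j)

theorem IsBlockSeq.sqSub {lam : Ordinal.{u}} {α i j : Ordinal.{v}}
    {s : Ordinal.{v} → Set Ordinal.{u}} (hs : IsBlockSeq lam α s) (hij : i ≤ j) (hj : j ≤ α) :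
    SqSub (s i) (s j) := by
  induction j using Ordinal.limitRecOn generalizing i with
  | zero => exact nonpos_iff_eq_zero.1 hij ▸ SqSub.refl _
  | add_one j ih =>
    obtain rfl | hij := hij.eq_or_lt
    · exact SqSub.refl _
    · have hjα : j < α := Order.add_one_le_iff.1 hj
      exact (ih (Order.lt_add_one_iff.1 hij) hjα.le).trans (hs.sqSub_add_one j hjα)
  | limit j hlim ih =>
    obtain rfl | hij := hij.eq_or_lt
    · exact SqSub.refl _
    · rw [hs.eq_clIn j hj hlim]
      have hdir : DirectedOn (· ≤ ·) (Iio j) := (isChain_of_trichotomous _).directedOn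
      exact (SqSub.biUnion_right hdir (fun k _ l hl hkl => ih l hl hkl (hl.le.trans hj))
        hij).clIn_right (hs.closedBddIn i (hij.le.trans hj))

/-- A sequence `⟨S_i : i ≤ α⟩` of functions from the conditions `D` to the closed bounded subsets of
`lam` satisfying clauses (a)–(e); those that concern one condition at a time are collected in
`IsBlockSeq`. -/
structure IsStrategy {D : Type w} [Preorder D] (lam : Ordinal.{u}) (α : Ordinal.{v})
    (S : Ordinal.{v} → D → Set Ordinal.{u}) : Prop where
  isBlockSeq : ∀ d, IsBlockSeq lam α (S · d)
  zero_eq_empty : ∀ d, S 0 d = ∅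
  nonempty : ∀ i, 1 ≤ i → i ≤ α → ∀ d, (S i d).Nonempty
  antitone : ∀ i ≤ α, Antitone (S i)
  sdiff_sqSub_sdiff : ∀ i < α, ∀ d e, e ≤ d → SqSub (S (i + 1) d \ S i d) (S (i + 1) e \ S i e)

namespace IsStrategy

variable {D : Type w} [Preorder D] {lam γ : Ordinal.{u}} {α i j η ξ : Ordinal.{v}}
  {S : Ordinal.{v} → D → Set Ordinal.{u}} {G : Set D}

theorem closedBddIn (hS : IsStrategy lam α S) (hi : i ≤ α) (d : D) : ClosedBddIn lam (S i d) :=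
  (hS.isBlockSeq d).closedBddIn i hi

theorem biUnion_sqSub_biUnion (hS : IsStrategy lam α S) (hG : DirectedOn (· ≥ ·) G) (hij : i ≤ j)
    (hj : j ≤ α) : SqSub (⋃ d ∈ G, S i d) (⋃ d ∈ G, S j d) :=
  SqSub.biUnion hG (fun _ _ _ _ hed => hS.antitone i (hij.trans hj) hed)
    (fun _ _ _ _ hed => hS.antitone j hj hed) fun d _ => (hS.isBlockSeq d).sqSub hij hj

theorem biUnion_add_one_subset_Iic (hS : IsStrategy lam α S) (hG : DirectedOn (· ≥ ·) G)
    (hi : i < α) (hγ : γ < lam) (hγS : γ ∉ ⋃ d ∈ G, S (i + 1) d)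
    (hacc : AccPt γ (𝓟 (⋃ d ∈ G, S (i + 1) d))) (hnacc : ¬ AccPt γ (𝓟 (⋃ d ∈ G, S i d))) :
    ⋃ d ∈ G, S (i + 1) d ⊆ Iic γ := by
  have hi' : i + 1 ≤ α := Order.add_one_le_of_lt hi
  have hlower : ⋃ d ∈ G, S i d ⊆ Iic γ :=
    (hS.biUnion_sqSub_biUnion hG (lt_add_one i).le hi').subset_Iic_of_not_accPt hacc hnacc
  have hcover : ⋃ d ∈ G, S (i + 1) d ⊆ (⋃ d ∈ G, S i d) ∪ ⋃ d ∈ G, S (i + 1) d \ S i d := by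
    refine iUnion₂_subset fun d hd x hx => ?_
    by_cases hxi : x ∈ S i d
    · exact Or.inl (mem_biUnion hd hxi)
    · exact Or.inr (mem_biUnion hd ⟨hx, hxi⟩)
  have hincr : AccPt γ (𝓟 (⋃ d ∈ G, S (i + 1) d \ S i d)) := by
    have hunion := hacc.mono (principal_mono.2 hcover)
    rw [← sup_principal, accPt_sup] at hunion
    exact hunion.resolve_left hnacc
  refine iUnion₂_subset fun d hd y hy => mem_Iic.2 <| not_lt.1 fun hγy =>
    hγS (mem_biUnion hd ?_)
  have hyi : y ∉ S i d := fun hyi => (hlower (mem_biUnion hd hyi)).not_gt hγy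
  have hsq : SqSub (S (i + 1) d \ S i d) (⋃ e ∈ G, S (i + 1) e \ S i e) :=
    SqSub.biUnion_right hG (fun d _ e _ hed => hS.sdiff_sqSub_sdiff i hi d e hed) hd
  exact (hS.closedBddIn hi' d).mem_of_accPt hγ
    ((hsq.accPt_of_lt hincr ⟨hy, hyi⟩ hγy).mono (principal_mono.2 sdiff_subset))

theorem biUnion_subset_Iic_of_isSuccLimit (hS : IsStrategy lam α S) (hη : η ≤ α)
    (hlim : Order.IsSuccLimit η) (hlower : ∀ i < η, ⋃ d ∈ G, S i d ⊆ Iic γ) :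
    ⋃ d ∈ G, S η d ⊆ Iic γ := by
  refine iUnion₂_subset fun d hd => ?_
  rw [(hS.isBlockSeq d).eq_clIn η hη hlim]
  exact clIn_subset_closure.trans <| closure_minimal
    (iUnion₂_subset fun i hi => (subset_biUnion_of_mem hd).trans (hlower i hi)) isClosed_Iic

theorem isLUB_biUnion_of_forall_lt_not_accPt (hS : IsStrategy lam α S)
    (hG : DirectedOn (· ≥ ·) G) (hη : η ≤ α) (hγ : γ < lam) (hγS : γ ∉ ⋃ d ∈ G, S η d)
    (hacc : AccPt γ (𝓟 (⋃ d ∈ G, S η d))) (hmin : ∀ i < η, ¬ AccPt γ (𝓟 (⋃ d ∈ G, S i d))) :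
    IsLUB (⋃ d ∈ G, S η d) γ := by
  suffices hle : ⋃ d ∈ G, S η d ⊆ Iic γ from
    isLUB_of_mem_closure hle (mem_closure_iff_clusterPt.2 hacc.clusterPt)
  obtain rfl | ⟨i, rfl⟩ | hlim := Ordinal.zero_or_succ_or_isSuccLimit η
  · simp [hS.zero_eq_empty]
  · have hi : i < Order.succ i := Order.lt_succ i
    exact hS.biUnion_add_one_subset_Iic hG (hi.trans_le hη) hγ hγS hacc (hmin i hi)
  · exact hS.biUnion_subset_Iic_of_isSuccLimit hη hlim fun i hi =>
      (hS.biUnion_sqSub_biUnion hG hi.le hη).subset_Iic_of_not_accPt hacc (hmin i hi)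

theorem exists_eq_sSup_image_sSup (hS : IsStrategy lam α S) (hG : DirectedOn (· ≥ ·) G)
    (hξ : ξ ≤ α) (hγ : γ < lam) (hγS : γ ∉ ⋃ d ∈ G, S ξ d) (hacc : AccPt γ (𝓟 (⋃ d ∈ G, S ξ d))) :
    ∃ η ∈ Icc 1 ξ, γ = sSup ((fun d => sSup (S η d)) '' G) := by
  obtain ⟨η, hηξ, hη⟩ := exists_minimal_le_of_wellFoundedLT
    (fun η => AccPt γ (𝓟 (⋃ d ∈ G, S η d))) ξ hacc
  have hη1 : 1 ≤ η := by
    rw [Order.one_le_iff_ne_zero]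
    rintro rfl
    simpa [hS.zero_eq_empty, AccPt, neBot_iff] using hη.prop
  have hγη : γ ∉ ⋃ d ∈ G, S η d := fun h => hγS ((hS.biUnion_sqSub_biUnion hG hηξ hξ).1 h)
  exact ⟨η, ⟨hη1, hηξ⟩, .symm <| sSup_image_sSup_of_isLUB_biUnion <|
    hS.isLUB_biUnion_of_forall_lt_not_accPt hG (hηξ.trans hξ) hγ hγη hη.prop
      fun _ hi => hη.not_prop_of_lt hi⟩

theorem sSup_image_sSup_mem_clIn (hS : IsStrategy lam α S) (hGne : G.Nonempty)
    (hGcard : Cardinal.lift.{u} (Cardinal.mk G) < Cardinal.lift.{w} lam.cof) (hξ : ξ ≤ α)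
    (hη : η ∈ Icc 1 ξ) :
    sSup ((fun d => sSup (S η d)) '' G) ∈ clIn lam (⋃ d ∈ G, S ξ d) := by
  have hηα : η ≤ α := hη.2.trans hξ
  have hlt (d : D) : sSup (S η d) < lam := (hS.closedBddIn hηα d).2.1
  refine mem_clIn_of_mem_closure ?_ (closure_mono ?_ (csSup_mem_closure (hGne.image _) ?_))
  · rw [sSup_image']
    rw [Ordinal.lift_cof] at hGcard
    exact Ordinal.lift_iSup_lt_of_lt_cof hGcard fun d => hlt d
  · rintro _ ⟨d, hd, rfl⟩
    exact mem_biUnion hd <| ((hS.isBlockSeq d).sqSub hη.2 hξ).1 <|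
      (hS.closedBddIn hηα d).sSup_mem (hS.nonempty η hη.1 hηα d)
  · exact ⟨lam, forall_mem_image.2 fun d _ => (hlt d).le⟩

end IsStrategy

theorem strategy_clubs_closure_eq_general {D : Type w} [Preorder D] {lam : Ordinal.{u}}
    {α ξ : Ordinal.{v}} {S : Ordinal.{v} → D → Set Ordinal.{u}} (hS : IsStrategy lam α S)
    {G : Set D} (hGne : G.Nonempty) (hG : DirectedOn (· ≥ ·) G)
    (hGcard : Cardinal.lift.{u} (Cardinal.mk G) < Cardinal.lift.{w} lam.cof) (hξ : ξ ≤ α) :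
    clIn lam (⋃ d ∈ G, S ξ d) =
      (⋃ d ∈ G, S ξ d) ∪ ⋃ η ∈ Icc 1 ξ, {sSup ((fun d => sSup (S η d)) '' G)} := by
  refine Subset.antisymm (fun γ hγ => ?_) (union_subset subset_union_left ?_)
  · by_cases hγS : γ ∈ ⋃ d ∈ G, S ξ d
    · exact Or.inl hγS
    · obtain ⟨hγlam, hacc⟩ := (mem_clIn_iff.1 hγ).resolve_left hγS
      obtain ⟨η, hη, rfl⟩ := hS.exists_eq_sSup_image_sSup hG hξ hγlam hγS hacc
      exact Or.inr (mem_biUnion hη rfl)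
  · exact iUnion₂_subset fun η hη =>
      singleton_subset_iff.2 (hS.sSup_image_sSup_mem_clIn hGne hGcard hξ hη)

/-- under clauses (a)–(e) of the definition of a strategy (with the blocks
nonempty at levels `1 ≤ i ≤ α`), for every `ξ ≤ α` the closure of `⋃_{d ∈ G} S ξ d`
equals the union itself together with the suprema, over `d ∈ G`, of the maxima
(`= sSup`, since the blocks are closed bounded nonempty) of the blocks at the levels
`1 ≤ η ≤ ξ`. -/
theorem strategy_clubs_closure_eq {D : Type u} [Preorder D] (lam : Cardinal.{u})
    (hreg : lam.IsRegular) (hunc : Cardinal.aleph0 < lam)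
    (G : Set D) (hGne : G.Nonempty)
    (hGdir : ∀ d ∈ G, ∀ e ∈ G, ∃ f ∈ G, f ≤ d ∧ f ≤ e)
    (hGcard : Cardinal.mk G < lam)
    (α : Ordinal.{u}) (S : Ordinal.{u} → D → Set Ordinal.{u})
    (ha : ∀ i ≤ α, ∀ d : D, ClosedBddIn lam.ord (S i d))
    (h0 : ∀ d : D, S 0 d = ∅)
    (hne : ∀ i : Ordinal, 1 ≤ i → i ≤ α → ∀ d : D, (S i d).Nonempty)
    (hb : ∀ i ≤ α, ∀ d e : D, e ≤ d → S i d ⊆ S i e)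
    (hc : ∀ i < α, ∀ d : D, SqSub (S i d) (S (i + 1) d))
    (hd : ∀ i < α, ∀ d e : D, e ≤ d → SqSub (S (i + 1) d \ S i d) (S (i + 1) e \ S i e))
    (he : ∀ i ≤ α, Order.IsSuccLimit i → ∀ d : D, S i d = clIn lam.ord (⋃ j ∈ Set.Iio i, S j d)) :
    ∀ ξ ≤ α, clIn lam.ord (⋃ d ∈ G, S ξ d) =
      (⋃ d ∈ G, S ξ d) ∪
        ⋃ η ∈ Set.Icc (1 : Ordinal) ξ, {sSup ((fun d => sSup (S η d)) '' G)} :=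
  fun _ hξ => strategy_clubs_closure_eq_general
    ⟨fun d => ⟨fun i hi => ha i hi d, fun i hi => hc i hi d, fun i hi hlim => he i hi hlim d⟩,
      h0, hne, fun i hi _ _ hed => hb i hi _ _ hed, hd⟩
    hGne hGdir (by simpa only [Cardinal.lift_id, hreg.cof_ord] using hGcard) hξ
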